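/- Let L be a full-rank ℤ-lattice in an n-dimensional real inner product space E and let λ := min{ ‖x‖ : x ∈ L, x ≠ 0 } be its minimum. For 1 ≤ i ≤ n let γ_i denote the i-th Hermite constant, γ_i := sup{ min{ ‖y‖² : y ∈ Λ, y ≠ 0 } / covol(Λ)^{2/i} : Λ a full-rank ℤ-lattice in the Euclidean space ℝ^i }. Then h⁰(L) ≤ n · h⁰(ℤ) + ∑_{i=1}^{n} log max{ 1, γ_i/λ }, where h⁰(ℤ) := log ∑_{m∈ℤ} exp(−π m²). -/

import Mathlib

open MeasureTheory

/-!
By Poisson summation, a translate of the Gaussian of width `r` sums over `ℤ` to at most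
`θ ⬝ max {1, r}`, where `θ = ∑ exp (-π m²)`. A nonzero vector `u` of the dual lattice `L*` cuts `L`
into slices lying in equidistant hyperplanes orthogonal to `u`; each slice is a translate of the
sublattice `L ∩ u^⊥`, and the heights of the slices lie in a translate of `‖u‖⁻¹ ℤ`. Hence the
Gaussian mass of any translate of `L` is at most `θ ⬝ max {1, ‖u‖}` times the largest Gaussian mass
of a translate of `L ∩ u^⊥`. Since `covol L ⬝ covol L* = 1`, a shortest such `u` has length at most
`γ_n / λ`, and induction on the rank of `L` multiplies up these factors.
-/

section IntegerGaussian

open Real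

/-- The theta series of `ℤ` at the Gaussian `exp (-π x ^ 2)`, so that `log intTheta = h⁰(ℤ)`. -/
noncomputable def intTheta : ℝ := ∑' m : ℤ, exp (-π * (m : ℝ) ^ 2)

theorem summable_exp_neg_pi_mul_add_div_sq {r : ℝ} (hr : r ≠ 0) (s : ℝ) :
    Summable fun m : ℤ ↦ exp (-π * ((m + s) / r) ^ 2) := by
  have h := (summable_jacobiTheta₂_term_iff (Complex.I * (s / r ^ 2 : ℝ))
    (Complex.I * ((r ^ 2)⁻¹ : ℝ))).2
    (by simpa only [Complex.I_mul_im, Complex.ofReal_re] using inv_pos.2 (by positivity))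
  refine (h.norm.mul_left (exp (-π * (s / r) ^ 2))).congr fun m ↦ ?_
  rw [norm_jacobiTheta₂_term, ← exp_add]
  simp only [Complex.I_mul_im, Complex.ofReal_re]
  congr 1
  ring

theorem summable_exp_neg_pi_mul_int_div_sq {r : ℝ} (hr : r ≠ 0) :
    Summable fun m : ℤ ↦ exp (-π * (m / r) ^ 2) := by
  simpa only [add_zero] using summable_exp_neg_pi_mul_add_div_sq hr 0

theorem one_le_intTheta : 1 ≤ intTheta := by
  have h : Summable fun m : ℤ ↦ exp (-π * (m : ℝ) ^ 2) := by
    simpa only [div_one] using summable_exp_neg_pi_mul_int_div_sq one_ne_zero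
  simpa [intTheta] using h.le_tsum 0 fun _ _ ↦ (exp_pos _).le

theorem tsum_exp_neg_pi_mul_int_div_sq_le_intTheta {r : ℝ} (hr₀ : 0 < r) (hr₁ : r ≤ 1) :
    ∑' m : ℤ, exp (-π * (m / r) ^ 2) ≤ intTheta := by
  refine (summable_exp_neg_pi_mul_int_div_sq hr₀.ne').tsum_le_tsum (fun m ↦ ?_)
    (by simpa only [div_one] using summable_exp_neg_pi_mul_int_div_sq one_ne_zero)
  have h : (m : ℝ) ^ 2 ≤ (m / r) ^ 2 := by
    rw [div_pow]
    exact le_div_self (sq_nonneg _) (by positivity) (pow_le_one₀ hr₀.le hr₁)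
  exact exp_le_exp.2 (mul_le_mul_of_nonpos_left h (neg_nonpos.2 pi_pos.le))

theorem tsum_exp_neg_pi_mul_int_div_sq {r : ℝ} (hr : 0 < r) :
    ∑' m : ℤ, exp (-π * (m / r) ^ 2) = r * ∑' m : ℤ, exp (-π * (r * m) ^ 2) := by
  have h := tsum_exp_neg_mul_int_sq (pow_pos hr 2)
  rw [← sqrt_eq_rpow, sqrt_sq hr.le, one_div, eq_inv_mul_iff_mul_eq₀ hr.ne'] at h
  simpa only [mul_pow, div_pow, ← mul_assoc, div_mul_eq_mul_div, mul_div_assoc] using h.symm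

/-- In the Poisson-dual series a translation only inserts phases, which the triangle inequality
discards. -/
theorem tsum_exp_neg_pi_mul_add_div_sq_le {r : ℝ} (hr : 0 < r) (s : ℝ) :
    ∑' m : ℤ, exp (-π * ((m + s) / r) ^ 2) ≤ ∑' m : ℤ, exp (-π * (m / r) ^ 2) := by
  have hsqrt : ((r ^ 2 : ℝ) : ℂ) ^ (1 / 2 : ℂ) = r := by
    rw [show (1 / 2 : ℂ) = ((1 / 2 : ℝ) : ℂ) by norm_num, ← Complex.ofReal_cpow (sq_nonneg r),
      ← sqrt_eq_rpow, sqrt_sq hr.le]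
  have poisson := Complex.tsum_exp_neg_quadratic (a := (r ^ 2 : ℝ))
    (by simpa only [Complex.ofReal_re] using pow_pos hr 2) (-Complex.I * s)
  have hshift (m : ℤ) : Complex.exp (-π / (r ^ 2 : ℝ) * (m + Complex.I * (-Complex.I * s)) ^ 2) =
      (exp (-π * ((m + s) / r) ^ 2) : ℝ) := by
    rw [← mul_assoc, mul_neg, Complex.I_mul_I, neg_neg, one_mul]
    push_cast
    congr 1
    ring
  have hphase (m : ℤ) :
      ‖Complex.exp (-π * (r ^ 2 : ℝ) * m ^ 2 + 2 * π * (-Complex.I * s) * m)‖ =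
        exp (-π * (r * m) ^ 2) := by
    rw [Complex.norm_exp, show (-π * (r ^ 2 : ℝ) * m ^ 2 + 2 * π * (-Complex.I * s) * m : ℂ) =
      (-π * (r * m) ^ 2 : ℝ) + (-2 * π * s * m : ℝ) * Complex.I by push_cast; ring]
    simp only [Complex.add_re, Complex.ofReal_re, Complex.re_ofReal_mul, Complex.I_re, mul_zero,
      add_zero]
  simp only [hshift, hsqrt] at poisson
  rw [← Complex.ofReal_tsum, one_div, eq_inv_mul_iff_mul_eq₀ (by exact_mod_cast hr.ne')] at poisson
  have hsum : Summable fun m : ℤ ↦ exp (-π * (r * m) ^ 2) := by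
    simpa only [div_inv_eq_mul, mul_comm r] using
      summable_exp_neg_pi_mul_int_div_sq (inv_ne_zero hr.ne')
  calc ∑' m : ℤ, exp (-π * ((m + s) / r) ^ 2)
      = ‖((∑' m : ℤ, exp (-π * ((m + s) / r) ^ 2) : ℝ) : ℂ)‖ :=
        (Complex.norm_of_nonneg (tsum_nonneg fun _ ↦ (exp_pos _).le)).symm
    _ = r * ‖∑' m : ℤ, Complex.exp (-π * (r ^ 2 : ℝ) * m ^ 2 + 2 * π * (-Complex.I * s) * m)‖ := by
        rw [← poisson, norm_mul, Complex.norm_of_nonneg hr.le]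
    _ ≤ r * ∑' m : ℤ, exp (-π * (r * m) ^ 2) := by
        gcongr
        simpa only [hphase] using norm_tsum_le_tsum_norm (hsum.congr fun m ↦ (hphase m).symm)
    _ = ∑' m : ℤ, exp (-π * (m / r) ^ 2) := (tsum_exp_neg_pi_mul_int_div_sq hr).symm

theorem tsum_exp_neg_pi_mul_add_div_sq_le_intTheta_mul {r : ℝ} (hr : 0 < r) (s : ℝ) :
    ∑' m : ℤ, exp (-π * ((m + s) / r) ^ 2) ≤ intTheta * max 1 r := by
  refine (tsum_exp_neg_pi_mul_add_div_sq_le hr s).trans ?_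
  rcases le_total r 1 with h | h
  · rw [max_eq_left h, mul_one]
    exact tsum_exp_neg_pi_mul_int_div_sq_le_intTheta hr h
  · rw [max_eq_right h, tsum_exp_neg_pi_mul_int_div_sq hr, mul_comm]
    gcongr
    simpa only [div_inv_eq_mul, mul_comm r] using
      tsum_exp_neg_pi_mul_int_div_sq_le_intTheta (inv_pos.2 hr) (inv_le_one_of_one_le₀ h)

end IntegerGaussian

section Minimum

variable {E : Type*} [NormedAddCommGroup E]

/-- The minimum of a lattice, that is, the length of its shortest nonzero vectors. The zero lattice
gets the junk value `0`. -/
noncomputable def latticeMin (L : Submodule ℤ E) : ℝ :=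
  sInf {t : ℝ | ∃ x : E, x ∈ L ∧ x ≠ 0 ∧ ‖x‖ = t}

variable {L : Submodule ℤ E}

theorem latticeMin_nonneg (L : Submodule ℤ E) : 0 ≤ latticeMin L :=
  Real.sInf_nonneg (by rintro _ ⟨x, -, -, rfl⟩; exact norm_nonneg x)

theorem latticeMin_le_norm {x : E} (hx : x ∈ L) (hx₀ : x ≠ 0) : latticeMin L ≤ ‖x‖ :=
  csInf_le ⟨0, by rintro _ ⟨y, -, -, rfl⟩; exact norm_nonneg y⟩ ⟨x, hx, hx₀, rfl⟩

theorem le_latticeMin (hL : L ≠ ⊥) {m : ℝ} (hm : ∀ x ∈ L, x ≠ 0 → m ≤ ‖x‖) : m ≤ latticeMin L := by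
  obtain ⟨x, hx, hx₀⟩ := L.exists_mem_ne_zero_of_ne_bot hL
  refine le_csInf ⟨‖x‖, x, hx, hx₀, rfl⟩ ?_
  rintro _ ⟨y, hy, hy₀, rfl⟩
  exact hm y hy hy₀

theorem latticeMin_pos [DiscreteTopology L] (hL : L ≠ ⊥) : 0 < latticeMin L := by
  obtain ⟨ε, hε, hball⟩ := Metric.exists_ball_inter_eq_singleton_of_mem_discrete
    (s := (L : Set E)) DiscreteTopology.isDiscrete L.zero_mem
  refine hε.trans_le (le_latticeMin hL fun x hx hx₀ ↦ le_of_not_gt fun hlt ↦ hx₀ ?_)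
  exact (hball.subset ⟨mem_ball_zero_iff.2 hlt, hx⟩ :)

theorem exists_norm_eq_latticeMin [ProperSpace E] [DiscreteTopology L] (hL : L ≠ ⊥) :
    ∃ x ∈ L, x ≠ 0 ∧ ‖x‖ = latticeMin L := by
  obtain ⟨x₀, hx₀, hx₀_ne⟩ := L.exists_mem_ne_zero_of_ne_bot hL
  have hclosed : IsClosed (L : Set E) :=
    have : DiscreteTopology L.toAddSubgroup := ‹DiscreteTopology L›
    AddSubgroup.isClosed_of_discrete (H := L.toAddSubgroup)
  have hfinite : {x : E | x ∈ L ∧ x ≠ 0 ∧ ‖x‖ ≤ ‖x₀‖}.Finite :=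
    (Metric.finite_isBounded_inter_isClosed DiscreteTopology.isDiscrete
      (Metric.isBounded_closedBall (x := 0) (r := ‖x₀‖)) hclosed).subset
      fun x hx ↦ ⟨mem_closedBall_zero_iff.2 hx.2.2, hx.1⟩
  obtain ⟨x, ⟨hx, hx_ne, hx_le⟩, hmin⟩ :=
    Set.exists_min_image _ norm hfinite ⟨x₀, hx₀, hx₀_ne, le_rfl⟩
  refine ⟨x, hx, hx_ne, le_antisymm (le_latticeMin hL fun y hy hy₀ ↦ ?_)
    (latticeMin_le_norm hx hx_ne)⟩
  rcases le_total ‖y‖ ‖x₀‖ with h | h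
  · exact hmin y ⟨hy, hy₀, h⟩
  · exact hx_le.trans h

theorem ne_bot_of_isZLattice [NormedSpace ℝ E] [Nontrivial E] (L : Submodule ℤ E)
    [DiscreteTopology L] [IsZLattice ℝ L] : L ≠ ⊥ := by
  rintro rfl
  simpa using IsZLattice.span_top (K := ℝ) (L := (⊥ : Submodule ℤ E))

end Minimum

section Minkowski

open Module

variable {E : Type*} [NormedAddCommGroup E] [NormedSpace ℝ E] [FiniteDimensional ℝ E]
  [Nontrivial E] [MeasurableSpace E] [BorelSpace E]

theorem latticeMin_le_of_covolume_mul_two_pow_le (L : Submodule ℤ E) [DiscreteTopology L]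
    [IsZLattice ℝ L] (μ : Measure E) [μ.IsAddHaarMeasure] {r : ℝ}
    (h : ZLattice.covolume L μ * 2 ^ finrank ℝ E ≤ μ.real (Metric.closedBall 0 r)) :
    latticeMin L ≤ r := by
  have : DiscreteTopology L.toAddSubgroup := ‹DiscreteTopology L›
  have : Countable L.toAddSubgroup := (inferInstance : Countable L)
  have hfund := ZLattice.isAddFundamentalDomain (Free.chooseBasis ℤ L) μ
  rw [ZLattice.covolume_eq_measure_fundamentalDomain L μ hfund] at h
  have hmeasure := (ENNReal.ofReal_le_ofReal h).trans_eq
    (ENNReal.ofReal_toReal Metric.isBounded_closedBall.measure_lt_top.ne)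
  rw [ENNReal.ofReal_mul measureReal_nonneg, measureReal_def, ENNReal.ofReal_toReal
    (ZSpan.fundamentalDomain_isBounded _).measure_lt_top.ne, ENNReal.ofReal_pow zero_le_two,
    ENNReal.ofReal_ofNat] at hmeasure
  obtain ⟨x, hx₀, hx⟩ := exists_ne_zero_mem_lattice_of_measure_mul_two_pow_le_measure
    (L := L.toAddSubgroup) hfund (by simp) (convex_closedBall 0 r) (isCompact_closedBall 0 r)
    hmeasure
  exact (latticeMin_le_norm x.2 fun h ↦ hx₀ (Subtype.ext h)).trans (mem_closedBall_zero_iff.1 hx)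

theorem latticeMin_le_two_mul_rpow (L : Submodule ℤ E) [DiscreteTopology L] [IsZLattice ℝ L]
    (μ : Measure E) [μ.IsAddHaarMeasure] :
    latticeMin L ≤ 2 * (ZLattice.covolume L μ / μ.real (Metric.closedBall 0 1)) ^
      ((1 : ℝ) / finrank ℝ E) := by
  have hc := ZLattice.covolume_pos L μ
  have hball : 0 < μ.real (Metric.closedBall (0 : E) 1) :=
    ENNReal.toReal_pos (Metric.measure_closedBall_pos μ _ one_pos).ne'
      Metric.isBounded_closedBall.measure_lt_top.ne
  refine latticeMin_le_of_covolume_mul_two_pow_le L μ (le_of_eq ?_)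
  rw [measureReal_def, Measure.addHaar_closedBall' _ _ (by positivity), ENNReal.toReal_mul,
    ENNReal.toReal_ofReal (by positivity), ← measureReal_def, mul_pow, one_div,
    Real.rpow_inv_natCast_pow (by positivity) finrank_pos.ne']
  field_simp

end Minkowski

section Hermite

open Module

/-- The Hermite invariant of a full-rank lattice: its squared minimum, normalised by the covolume
to be invariant under scaling. -/
noncomputable def hermiteInvariant {i : ℕ} (Λ : Submodule ℤ (EuclideanSpace ℝ (Fin i))) : ℝ :=
  sInf {s : ℝ | ∃ y : EuclideanSpace ℝ (Fin i), y ∈ Λ ∧ y ≠ 0 ∧ ‖y‖ ^ 2 = s} /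
    ZLattice.covolume Λ volume ^ ((2 : ℝ) / i)

/-- The `i`-th Hermite constant `γ_i`, the supremum of the Hermite invariants of the full-rank
lattices in `ℝ^i`. -/
noncomputable def hermiteConstant (i : ℕ) : ℝ :=
  sSup {t : ℝ | ∃ Λ : Submodule ℤ (EuclideanSpace ℝ (Fin i)), DiscreteTopology Λ ∧
    Submodule.span ℝ (Λ : Set (EuclideanSpace ℝ (Fin i))) = ⊤ ∧ t = hermiteInvariant Λ}

theorem sInf_norm_sq_eq_latticeMin_sq {E : Type*} [NormedAddCommGroup E] [ProperSpace E]
    {L : Submodule ℤ E} [DiscreteTopology L] (hL : L ≠ ⊥) :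
    sInf {s : ℝ | ∃ y : E, y ∈ L ∧ y ≠ 0 ∧ ‖y‖ ^ 2 = s} = latticeMin L ^ 2 := by
  obtain ⟨x, hx, hx₀, hx_min⟩ := exists_norm_eq_latticeMin hL
  refine IsLeast.csInf_eq ⟨⟨x, hx, hx₀, by rw [hx_min]⟩, ?_⟩
  rintro _ ⟨y, hy, hy₀, rfl⟩
  exact pow_le_pow_left₀ (latticeMin_nonneg L) (latticeMin_le_norm hy hy₀) 2

section Euclidean

variable {i : ℕ} [NeZero i] (Λ : Submodule ℤ (EuclideanSpace ℝ (Fin i))) [DiscreteTopology Λ]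
  [IsZLattice ℝ Λ]

theorem hermiteInvariant_eq_latticeMin_sq_div :
    hermiteInvariant Λ = latticeMin Λ ^ 2 / ZLattice.covolume Λ volume ^ ((2 : ℝ) / i) := by
  rw [hermiteInvariant, sInf_norm_sq_eq_latticeMin_sq (ne_bot_of_isZLattice Λ)]

theorem hermiteInvariant_le : hermiteInvariant Λ ≤
    4 * (volume.real (Metric.closedBall (0 : EuclideanSpace ℝ (Fin i)) 1))⁻¹ ^ ((2 : ℝ) / i) := by
  have hc := ZLattice.covolume_pos Λ volume
  have hmin := latticeMin_le_two_mul_rpow Λ volume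
  rw [finrank_euclideanSpace_fin] at hmin
  rw [hermiteInvariant_eq_latticeMin_sq_div, div_le_iff₀ (by positivity), mul_assoc,
    ← Real.mul_rpow (by positivity) hc.le, inv_mul_eq_div]
  refine (pow_le_pow_left₀ (latticeMin_nonneg Λ) hmin 2).trans_eq ?_
  rw [mul_pow, ← Real.rpow_mul_natCast (by positivity), Nat.cast_ofNat, one_div_mul_eq_div]
  norm_num

theorem hermiteInvariant_le_hermiteConstant : hermiteInvariant Λ ≤ hermiteConstant i := by
  refine le_csSup ⟨4 * (volume.real (Metric.closedBall (0 : EuclideanSpace ℝ (Fin i)) 1))⁻¹ ^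
    ((2 : ℝ) / i), ?_⟩ ⟨Λ, ‹_›, IsZLattice.span_top, rfl⟩
  rintro _ ⟨Λ', hΛ', hspan, rfl⟩
  have : IsZLattice ℝ Λ' := ⟨hspan⟩
  exact hermiteInvariant_le Λ'

theorem latticeMin_sq_le_hermiteConstant_mul_of_euclidean :
    latticeMin Λ ^ 2 ≤ hermiteConstant i * ZLattice.covolume Λ volume ^ ((2 : ℝ) / i) := by
  have hc := ZLattice.covolume_pos Λ volume
  rw [← div_le_iff₀ (by positivity), ← hermiteInvariant_eq_latticeMin_sq_div]
  exact hermiteInvariant_le_hermiteConstant Λ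

end Euclidean

theorem latticeMin_comap_linearIsometryEquiv {E F : Type*} [NormedAddCommGroup E] [NormedSpace ℝ E]
    [NormedAddCommGroup F] [NormedSpace ℝ F] (e : F ≃ₗᵢ[ℝ] E) (L : Submodule ℤ E) :
    latticeMin (ZLattice.comap ℝ L e.toLinearMap) = latticeMin L := by
  refine congrArg sInf (Set.ext fun t ↦ ⟨?_, ?_⟩)
  · rintro ⟨y, hy, hy₀, rfl⟩
    exact ⟨e y, hy, e.map_eq_zero_iff.not.2 hy₀, e.norm_map y⟩
  · rintro ⟨x, hx, hx₀, rfl⟩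
    refine ⟨e.symm x, ?_, e.symm.map_eq_zero_iff.not.2 hx₀, e.symm.norm_map x⟩
    change e (e.symm x) ∈ L
    rwa [e.apply_symm_apply]

theorem latticeMin_sq_le_hermiteConstant_mul {E : Type*} [NormedAddCommGroup E]
    [InnerProductSpace ℝ E] [FiniteDimensional ℝ E] [Nontrivial E] [MeasurableSpace E]
    [BorelSpace E] (L : Submodule ℤ E) [DiscreteTopology L] [IsZLattice ℝ L] :
    latticeMin L ^ 2 ≤ hermiteConstant (finrank ℝ E) *
      ZLattice.covolume L volume ^ ((2 : ℝ) / finrank ℝ E) := by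
  have : NeZero (finrank ℝ E) := ⟨finrank_pos.ne'⟩
  let e := (stdOrthonormalBasis ℝ E).repr.symm
  rw [← latticeMin_comap_linearIsometryEquiv e,
    ← ZLattice.covolume_comap L volume volume (e := e.toContinuousLinearEquiv) e.measurePreserving]
  exact latticeMin_sq_le_hermiteConstant_mul_of_euclidean
    (ZLattice.comap ℝ L e.toContinuousLinearEquiv.toLinearMap)

end Hermite

section DualLattice

open Module LinearMap.BilinForm

variable {E : Type*} [NormedAddCommGroup E] [InnerProductSpace ℝ E]

/-- The dual `L*` of a lattice `L`, consisting of the vectors of the ambient space whose inner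
product with every vector of `L` is an integer. When `L` does not span, `L*` is not discrete: it
contains the orthogonal complement of `L`. -/
noncomputable def dualLattice (L : Submodule ℤ E) : Submodule ℤ E :=
  dualSubmodule (innerₗ E) L

theorem mem_dualLattice {L : Submodule ℤ E} {u : E} :
    u ∈ dualLattice L ↔ ∀ x ∈ L, ∃ k : ℤ, inner ℝ u x = k := by
  simp only [dualLattice, mem_dualSubmodule, Submodule.mem_one, innerₗ_apply_apply,
    algebraMap_int_eq, eq_intCast, eq_comm]

theorem nondegenerate_innerₗ : (innerₗ E : LinearMap.BilinForm ℝ E).Nondegenerate :=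
  ⟨fun x hx ↦ inner_self_eq_zero.1 (hx x), fun x hx ↦ inner_self_eq_zero.1 (hx x)⟩

theorem dualLattice_span {ι : Type*} [Finite ι] [DecidableEq ι] (b : Basis ι ℝ E) :
    dualLattice (Submodule.span ℤ (Set.range b)) =
      Submodule.span ℤ (Set.range (dualBasis (innerₗ E) nondegenerate_innerₗ b)) :=
  dualSubmodule_span_of_basis (innerₗ E) nondegenerate_innerₗ b

theorem det_mul_det_dualBasis {ι : Type*} [Fintype ι] [DecidableEq ι]
    (e : OrthonormalBasis ι ℝ E) (b : Basis ι ℝ E) :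
    e.toBasis.det b * e.toBasis.det (dualBasis (innerₗ E) nondegenerate_innerₗ b) = 1 := by
  rw [Basis.det_apply, Basis.det_apply, ← Matrix.det_transpose, ← Matrix.det_mul,
    ← Matrix.det_one (R := ℝ) (n := ι)]
  congr 1
  ext j k
  have hdual := apply_dualBasis_left (B := innerₗ E) nondegenerate_innerₗ b k j
  rw [innerₗ_apply_apply, ← e.sum_inner_mul_inner] at hdual
  simpa only [Matrix.mul_apply, Matrix.transpose_apply, Basis.toMatrix_apply, Matrix.one_apply,
    OrthonormalBasis.coe_toBasis_repr_apply, OrthonormalBasis.repr_apply_apply, mul_comm,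
    real_inner_comm] using hdual

variable [FiniteDimensional ℝ E]

theorem exists_basis_span_int_eq (L : Submodule ℤ E) [DiscreteTopology L] [IsZLattice ℝ L] :
    ∃ b : Basis (Fin (finrank ℝ E)) ℝ E, Submodule.span ℤ (Set.range b) = L := by
  let b := (Free.chooseBasis ℤ L).ofZLatticeBasis ℝ L
  refine ⟨b.reindex (b.indexEquiv (finBasis ℝ E)), ?_⟩
  rw [Basis.range_reindex]
  exact (Free.chooseBasis ℤ L).ofZLatticeBasis_span ℝ L

instance (L : Submodule ℤ E) [DiscreteTopology L] [IsZLattice ℝ L] :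
    DiscreteTopology (dualLattice L) := by
  obtain ⟨b, rfl⟩ := exists_basis_span_int_eq L
  rw [dualLattice_span]
  infer_instance

instance (L : Submodule ℤ E) [DiscreteTopology L] [IsZLattice ℝ L] :
    IsZLattice ℝ (dualLattice L) := by
  obtain ⟨b, rfl⟩ := exists_basis_span_int_eq L
  simp only [dualLattice_span]
  infer_instance

theorem covolume_span_eq_abs_det [MeasurableSpace E] [BorelSpace E] {ι : Type*} [Fintype ι]
    [DecidableEq ι] (e : OrthonormalBasis ι ℝ E) (b : Basis ι ℝ E) :
    ZLattice.covolume (Submodule.span ℤ (Set.range b)) volume = |e.toBasis.det b| := by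
  rw [ZLattice.covolume_eq_measure_fundamentalDomain _ _ (ZSpan.isAddFundamentalDomain b volume),
    ZSpan.measureReal_fundamentalDomain b volume e.toBasis,
    measureReal_congr (ZSpan.fundamentalDomain_ae_parallelepiped _ _), measureReal_def,
    OrthonormalBasis.coe_toBasis, e.volume_parallelepiped, ENNReal.toReal_one, mul_one]

theorem covolume_mul_covolume_dualLattice [MeasurableSpace E] [BorelSpace E] (L : Submodule ℤ E)
    [DiscreteTopology L] [IsZLattice ℝ L] :
    ZLattice.covolume L volume * ZLattice.covolume (dualLattice L) volume = 1 := by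
  obtain ⟨b, rfl⟩ := exists_basis_span_int_eq L
  rw [dualLattice_span, covolume_span_eq_abs_det (stdOrthonormalBasis ℝ E),
    covolume_span_eq_abs_det (stdOrthonormalBasis ℝ E), ← abs_mul, det_mul_det_dualBasis, abs_one]

theorem latticeMin_mul_latticeMin_dualLattice_le [Nontrivial E] (L : Submodule ℤ E)
    [DiscreteTopology L] [IsZLattice ℝ L] :
    latticeMin L * latticeMin (dualLattice L) ≤ hermiteConstant (finrank ℝ E) := by
  borelize E
  have hc := ZLattice.covolume_pos L volume
  have hc' := ZLattice.covolume_pos (dualLattice L) volume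
  have hγ : 0 ≤ hermiteConstant (finrank ℝ E) := nonneg_of_mul_nonneg_left
    ((sq_nonneg _).trans (latticeMin_sq_le_hermiteConstant_mul L)) (by positivity)
  refine le_of_sq_le_sq ?_ hγ
  set p : ℝ := 2 / finrank ℝ E
  calc (latticeMin L * latticeMin (dualLattice L)) ^ 2
      = latticeMin L ^ 2 * latticeMin (dualLattice L) ^ 2 := mul_pow _ _ 2
    _ ≤ hermiteConstant (finrank ℝ E) * ZLattice.covolume L volume ^ p *
          (hermiteConstant (finrank ℝ E) * ZLattice.covolume (dualLattice L) volume ^ p) := by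
        gcongr
        exacts [latticeMin_sq_le_hermiteConstant_mul L,
          latticeMin_sq_le_hermiteConstant_mul (dualLattice L)]
    _ = hermiteConstant (finrank ℝ E) ^ 2 := by
        rw [mul_mul_mul_comm, ← Real.mul_rpow hc.le hc'.le, covolume_mul_covolume_dualLattice,
          Real.one_rpow, mul_one, sq]

end DualLattice

section Span

open Module

variable {E : Type*} [NormedAddCommGroup E] [InnerProductSpace ℝ E]

theorem exists_mem_dualLattice_latticeMin_mul_norm_le {L : Submodule ℤ E} [DiscreteTopology L]
    [FiniteDimensional ℝ (Submodule.span ℝ (L : Set E))] (hL : L ≠ ⊥) :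
    ∃ u ∈ dualLattice L, u ∈ Submodule.span ℝ (L : Set E) ∧ u ≠ 0 ∧
      latticeMin L * ‖u‖ ≤ hermiteConstant (finrank ℝ (Submodule.span ℝ (L : Set E))) := by
  set W := Submodule.span ℝ (L : Set E)
  have hLW : ∀ x ∈ L, x ∈ W := fun x hx ↦ Submodule.subset_span hx
  let L₀ : Submodule ℤ W := ZLattice.comap ℝ L W.subtype
  have : DiscreteTopology L₀ :=
    ZLattice.comap_discreteTopology ℝ L W.subtypeL.continuous W.injective_subtype
  have : IsZLattice ℝ L₀ := ⟨Submodule.span_span_coe_preimage⟩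
  have : Nontrivial W := by
    obtain ⟨x, hx, hx₀⟩ := L.exists_mem_ne_zero_of_ne_bot hL
    exact ⟨⟨x, hLW x hx⟩, 0, fun h ↦ hx₀ (congrArg Subtype.val h)⟩
  have hmin : latticeMin L ≤ latticeMin L₀ :=
    le_latticeMin (ne_bot_of_isZLattice L₀) fun x hx hx₀ ↦
      latticeMin_le_norm hx (Subtype.coe_ne_coe.2 hx₀)
  obtain ⟨u, hu, hu₀, hu_norm⟩ := exists_norm_eq_latticeMin (ne_bot_of_isZLattice (dualLattice L₀))
  refine ⟨u, mem_dualLattice.2 fun x hx ↦ mem_dualLattice.1 hu ⟨x, hLW x hx⟩ hx, u.2,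
    Subtype.coe_ne_coe.2 hu₀, ?_⟩
  calc latticeMin L * ‖(u : E)‖ = latticeMin L * latticeMin (dualLattice L₀) := by
        rw [← hu_norm, Submodule.coe_norm]
    _ ≤ latticeMin L₀ * latticeMin (dualLattice L₀) := by
        gcongr
        exact latticeMin_nonneg _
    _ ≤ hermiteConstant (finrank ℝ W) := latticeMin_mul_latticeMin_dualLattice_le L₀

end Span

section Slicing

open Module Real
open scoped ENNReal

variable {E : Type*} [NormedAddCommGroup E]

/-- The total mass `∑_{x ∈ L} exp (-π ‖x + t‖ ^ 2)` that the Gaussian gives to the coset `L + t`.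
It takes values in `ℝ≥0∞` so that no summability has to be known in advance. -/
noncomputable def gaussianMass (L : Submodule ℤ E) (t : E) : ℝ≥0∞ :=
  ∑' x : L, ENNReal.ofReal (exp (-π * ‖(x : E) + t‖ ^ 2))

theorem gaussianMass_bot_le_one (t : E) : gaussianMass (⊥ : Submodule ℤ E) t ≤ 1 := by
  rw [gaussianMass, tsum_eq_single 0 fun x hx ↦ absurd (Subsingleton.elim x 0) hx,
    ENNReal.ofReal_le_one, exp_le_one_iff, neg_mul]
  exact neg_nonpos.2 (by positivity)

variable [InnerProductSpace ℝ E]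

/-- The sublattice of the vectors of `L` orthogonal to `u`. -/
noncomputable def orthogonalSlice (L : Submodule ℤ E) (u : E) : Submodule ℤ E :=
  L ⊓ ((ℝ ∙ u)ᗮ).restrictScalars ℤ

variable {L : Submodule ℤ E} {u : E}

theorem mem_orthogonalSlice {x : E} : x ∈ orthogonalSlice L u ↔ x ∈ L ∧ inner ℝ u x = 0 := by
  rw [orthogonalSlice, Submodule.mem_inf, Submodule.restrictScalars_mem,
    Submodule.mem_orthogonal_singleton_iff_inner_right]

theorem orthogonalSlice_le (L : Submodule ℤ E) (u : E) : orthogonalSlice L u ≤ L :=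
  inf_le_left

instance [DiscreteTopology L] : DiscreteTopology (orthogonalSlice L u) :=
  DiscreteTopology.of_subset (s := (L : Set E)) ‹_› (orthogonalSlice_le L u)

theorem span_orthogonalSlice_le (L : Submodule ℤ E) (u : E) :
    Submodule.span ℝ (orthogonalSlice L u : Set E) ≤ Submodule.span ℝ (L : Set E) :=
  Submodule.span_mono (orthogonalSlice_le L u)

instance [FiniteDimensional ℝ (Submodule.span ℝ (L : Set E))] :
    FiniteDimensional ℝ (Submodule.span ℝ (orthogonalSlice L u : Set E)) :=
  Submodule.finiteDimensional_of_le (span_orthogonalSlice_le L u)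

theorem finrank_span_orthogonalSlice_lt [FiniteDimensional ℝ (Submodule.span ℝ (L : Set E))]
    (hu : u ∈ Submodule.span ℝ (L : Set E)) (hu₀ : u ≠ 0) :
    finrank ℝ (Submodule.span ℝ (orthogonalSlice L u : Set E)) <
      finrank ℝ (Submodule.span ℝ (L : Set E)) := by
  refine Submodule.finrank_lt_finrank_of_lt ((span_orthogonalSlice_le L u).lt_of_ne fun h ↦ hu₀ ?_)
  have horth : Submodule.span ℝ (orthogonalSlice L u : Set E) ≤ (ℝ ∙ u)ᗮ :=
    Submodule.span_le.2 inf_le_right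
  exact inner_self_eq_zero.1
    (Submodule.mem_orthogonal_singleton_iff_inner_right.1 (horth (h ▸ hu)))

theorem norm_sq_eq_inner_div_norm_sq_add (u y : E) :
    ‖y‖ ^ 2 = (inner ℝ u y / ‖u‖) ^ 2 + ‖(ℝ ∙ u)ᗮ.starProjection y‖ ^ 2 := by
  rw [Submodule.norm_sq_eq_add_norm_sq_starProjection y (ℝ ∙ u), Submodule.starProjection_singleton,
    norm_smul, norm_div, RCLike.norm_ofReal, abs_of_nonneg (sq_nonneg ‖u‖), sq ‖u‖,
    div_mul_eq_mul_div, mul_div_assoc, div_self_mul_self', ← div_eq_mul_inv, div_pow, div_pow,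
    norm_eq_abs, sq_abs]

theorem tsum_fiber_inner_le {f : L → ℤ} (hf : ∀ x : L, inner ℝ u (x : E) = f x) {P : ℝ≥0∞}
    (hP : ∀ q, gaussianMass (orthogonalSlice L u) q ≤ P) (t : E) (m : ℤ) :
    ∑' x : {x : L // f x = m}, ENNReal.ofReal (exp (-π * ‖((x : L) : E) + t‖ ^ 2)) ≤
      P * ENNReal.ofReal (exp (-π * ((m + inner ℝ u t) / ‖u‖) ^ 2)) := by
  rcases isEmpty_or_nonempty {x : L // f x = m} with _ | ⟨⟨x₀, hx₀⟩⟩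
  · rw [tsum_empty]
    exact zero_le
  set q : E := (ℝ ∙ u)ᗮ.starProjection (x₀ + t)
  have hdiff (x : {x : L // f x = m}) : ((x : L) : E) - x₀ ∈ orthogonalSlice L u :=
    mem_orthogonalSlice.2
      ⟨sub_mem (x : L).2 x₀.2, by rw [inner_sub_right, hf, hf, x.2, hx₀, sub_self]⟩
  let toSlice (x : {x : L // f x = m}) : orthogonalSlice L u := ⟨_, hdiff x⟩
  have toSlice_injective : Function.Injective toSlice := fun x y h ↦
    Subtype.ext (Subtype.ext (sub_left_injective (congrArg Subtype.val h)))
  have hproj (x : {x : L // f x = m}) :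
      (ℝ ∙ u)ᗮ.starProjection ((x : L) + t) = toSlice x + q := by
    rw [← sub_add_cancel ((x : L) : E) x₀, add_assoc, map_add,
      Submodule.starProjection_eq_self_iff.2 (hdiff x).2]
  calc ∑' x : {x : L // f x = m}, ENNReal.ofReal (exp (-π * ‖((x : L) : E) + t‖ ^ 2))
      = (∑' x, ENNReal.ofReal (exp (-π * ‖(toSlice x : E) + q‖ ^ 2))) *
          ENNReal.ofReal (exp (-π * ((m + inner ℝ u t) / ‖u‖) ^ 2)) := by
        rw [← ENNReal.tsum_mul_right]
        refine tsum_congr fun x ↦ ?_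
        rw [← ENNReal.ofReal_mul (exp_pos _).le, ← exp_add, ← mul_add,
          norm_sq_eq_inner_div_norm_sq_add u, hproj, inner_add_right, hf, x.2, add_comm (_ ^ 2)]
    _ ≤ gaussianMass (orthogonalSlice L u) q *
          ENNReal.ofReal (exp (-π * ((m + inner ℝ u t) / ‖u‖) ^ 2)) := by
        gcongr
        exact ENNReal.tsum_comp_le_tsum_of_injective toSlice_injective
          fun y ↦ ENNReal.ofReal (exp (-π * ‖(y : E) + q‖ ^ 2))
    _ ≤ P * ENNReal.ofReal (exp (-π * ((m + inner ℝ u t) / ‖u‖) ^ 2)) := by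
        gcongr
        exact hP q

theorem gaussianMass_le_of_mem_dualLattice (hu : u ∈ dualLattice L) (hu₀ : u ≠ 0) {P : ℝ≥0∞}
    (hP : ∀ q, gaussianMass (orthogonalSlice L u) q ≤ P) (t : E) :
    gaussianMass L t ≤ P * ENNReal.ofReal (intTheta * max 1 ‖u‖) := by
  have hu_pos : 0 < ‖u‖ := norm_pos_iff.2 hu₀
  choose f hf using fun x : L ↦ mem_dualLattice.1 hu x x.2
  calc gaussianMass L t
      = ∑' (m : ℤ) (x : {x : L // f x = m}),
          ENNReal.ofReal (exp (-π * ‖((x : L) : E) + t‖ ^ 2)) := by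
        rw [gaussianMass, ← (Equiv.sigmaFiberEquiv f).tsum_eq, ENNReal.tsum_sigma']
        rfl
    _ ≤ ∑' m : ℤ, P * ENNReal.ofReal (exp (-π * ((m + inner ℝ u t) / ‖u‖) ^ 2)) :=
        ENNReal.tsum_le_tsum (tsum_fiber_inner_le hf hP t)
    _ ≤ P * ENNReal.ofReal (intTheta * max 1 ‖u‖) := by
        rw [ENNReal.tsum_mul_left, ← ENNReal.ofReal_tsum_of_nonneg (fun _ ↦ (exp_pos _).le)
          (summable_exp_neg_pi_mul_add_div_sq hu_pos.ne' _)]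
        gcongr
        exact tsum_exp_neg_pi_mul_add_div_sq_le_intTheta_mul hu_pos _

theorem one_le_ofReal_intTheta_mul_max (a : ℝ) : 1 ≤ ENNReal.ofReal (intTheta * max 1 a) :=
  ENNReal.one_le_ofReal.2 (one_le_mul_of_one_le_of_one_le one_le_intTheta (le_max_left _ _))

theorem gaussianMass_le_prod (L : Submodule ℤ E) [DiscreteTopology L]
    [FiniteDimensional ℝ (Submodule.span ℝ (L : Set E))] {lam : ℝ} (hlam : L ≠ ⊥ → 0 < lam)
    (hmin : ∀ x ∈ L, x ≠ 0 → lam ≤ ‖x‖) (t : E) :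
    gaussianMass L t ≤ ∏ i ∈ Finset.Icc 1 (finrank ℝ (Submodule.span ℝ (L : Set E))),
      ENNReal.ofReal (intTheta * max 1 (hermiteConstant i / lam)) := by
  induction hn : finrank ℝ (Submodule.span ℝ (L : Set E)) using Nat.strong_induction_on
    generalizing L t with
  | _ n ih =>
    rcases eq_or_ne L ⊥ with rfl | hL
    · exact (gaussianMass_bot_le_one t).trans
        (Finset.one_le_prod' fun _ _ ↦ one_le_ofReal_intTheta_mul_max _)
    obtain ⟨u, hu_dual, hu_span, hu₀, hu⟩ := exists_mem_dualLattice_latticeMin_mul_norm_le hL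
    have hu_norm : ‖u‖ ≤ hermiteConstant n / lam := by
      rw [le_div_iff₀' (hlam hL), ← hn]
      exact (mul_le_mul_of_nonneg_right (le_latticeMin hL hmin) (norm_nonneg u)).trans hu
    have hrank := hn ▸ finrank_span_orthogonalSlice_lt hu_span hu₀
    have hslice (q : E) : gaussianMass (orthogonalSlice L u) q ≤
        ∏ i ∈ Finset.Icc 1 (n - 1),
          ENNReal.ofReal (intTheta * max 1 (hermiteConstant i / lam)) :=
      (ih _ hrank (orthogonalSlice L u) (fun _ ↦ hlam hL)
        (fun x hx ↦ hmin x (orthogonalSlice_le L u hx)) q rfl).trans <|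
        Finset.prod_le_prod_of_subset_of_one_le'
          (Finset.Icc_subset_Icc_right (Nat.le_sub_one_of_lt hrank))
          fun _ _ _ ↦ one_le_ofReal_intTheta_mul_max _
    obtain ⟨k, rfl⟩ := Nat.exists_eq_succ_of_ne_zero (Nat.ne_zero_of_lt hrank)
    rw [Finset.prod_Icc_succ_top (by lia)]
    refine (gaussianMass_le_of_mem_dualLattice hu_dual hu₀ hslice t).trans ?_
    have := one_le_intTheta
    rw [Nat.succ_sub_one]
    gcongr

end Slicing

section ThetaBound

open Module

variable {E : Type*} [NormedAddCommGroup E] [InnerProductSpace ℝ E] (L : Submodule ℤ E)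
  [DiscreteTopology L] [FiniteDimensional ℝ (Submodule.span ℝ (L : Set E))] (t : E)

theorem gaussianMass_le_ofReal_prod : gaussianMass L t ≤
    ENNReal.ofReal (∏ i ∈ Finset.Icc 1 (finrank ℝ (Submodule.span ℝ (L : Set E))),
      intTheta * max 1 (hermiteConstant i / latticeMin L)) := by
  have := one_le_intTheta
  rw [ENNReal.ofReal_prod_of_nonneg fun i _ ↦ by positivity]
  exact gaussianMass_le_prod L latticeMin_pos (fun x ↦ latticeMin_le_norm) t

theorem summable_exp_neg_pi_mul_norm_add_sq :
    Summable fun x : L ↦ Real.exp (-Real.pi * ‖(x : E) + t‖ ^ 2) := by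
  simpa only [ENNReal.toReal_ofReal (Real.exp_pos _).le] using
    ENNReal.summable_toReal ((gaussianMass_le_ofReal_prod L t).trans_lt ENNReal.ofReal_lt_top).ne

theorem tsum_exp_neg_pi_mul_norm_add_sq_le_prod :
    ∑' x : L, Real.exp (-Real.pi * ‖(x : E) + t‖ ^ 2) ≤
      ∏ i ∈ Finset.Icc 1 (finrank ℝ (Submodule.span ℝ (L : Set E))),
        intTheta * max 1 (hermiteConstant i / latticeMin L) := by
  have := one_le_intTheta
  have hmass := gaussianMass_le_ofReal_prod L t
  rwa [gaussianMass, ← ENNReal.ofReal_tsum_of_nonneg (fun _ ↦ (Real.exp_pos _).le)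
    (summable_exp_neg_pi_mul_norm_add_sq L t),
    ENNReal.ofReal_le_ofReal_iff (Finset.prod_nonneg fun i _ ↦ by positivity)] at hmass

theorem theta_upper_bound_hermite_general :
    Real.log (∑' x : L, Real.exp (-Real.pi * ‖(x : E) + t‖ ^ 2)) ≤
      finrank ℝ (Submodule.span ℝ (L : Set E)) * Real.log intTheta +
        ∑ i ∈ Finset.Icc 1 (finrank ℝ (Submodule.span ℝ (L : Set E))),
          Real.log (max 1 (hermiteConstant i / latticeMin L)) := by
  have hθ : 0 < intTheta := one_pos.trans_le one_le_intTheta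
  have hpos : 0 < ∑' x : L, Real.exp (-Real.pi * ‖(x : E) + t‖ ^ 2) :=
    (summable_exp_neg_pi_mul_norm_add_sq L t).tsum_pos (fun _ ↦ (Real.exp_pos _).le) 0
      (Real.exp_pos _)
  refine (Real.log_le_log hpos (tsum_exp_neg_pi_mul_norm_add_sq_le_prod L t)).trans_eq ?_
  rw [Real.log_prod fun i _ ↦ by positivity,
    Finset.sum_congr rfl fun i _ ↦ Real.log_mul hθ.ne' (by positivity), Finset.sum_add_distrib,
    Finset.sum_const, Nat.card_Icc, Nat.add_sub_cancel, nsmul_eq_mul]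

end ThetaBound

/-- **Groenewegen's upper bound for the theta invariant.**
Let `L` be a full-rank `ℤ`-lattice in an `n`-dimensional real inner product space `E` and let
`λ = min {‖x‖ : x ∈ L, x ≠ 0}` be its minimum.  For `1 ≤ i ≤ n` let `γᵢ` denote the `i`-th
Hermite constant, i.e. the supremum over all full-rank `ℤ`-lattices `Λ` in `ℝⁱ` of
`min {‖y‖² : y ∈ Λ, y ≠ 0} / covol(Λ)^(2/i)`.  Then
`h⁰(L) ≤ n ⬝ h⁰(ℤ) + ∑_{i = 1}^{n} log max {1, γᵢ / λ}`, where
`h⁰(L) = log ∑_{x ∈ L} exp (-π ‖x‖²)` and `h⁰(ℤ) = log ∑_{m ∈ ℤ} exp (-π m²)`. -/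
theorem theta_upper_bound_hermite
    {E : Type*} [NormedAddCommGroup E] [InnerProductSpace ℝ E] [FiniteDimensional ℝ E]
    (n : ℕ) (hn : n = Module.finrank ℝ E)
    (L : Submodule ℤ E) [DiscreteTopology L]
    (hL : Submodule.span ℝ (L : Set E) = ⊤)
    (lam : ℝ) (hlam : lam = sInf {t : ℝ | ∃ x : E, x ∈ L ∧ x ≠ 0 ∧ ‖x‖ = t})
    (γ : ℕ → ℝ)
    (hγ : ∀ i, 1 ≤ i → i ≤ n →
      γ i = sSup {t : ℝ | ∃ Λ : Submodule ℤ (EuclideanSpace ℝ (Fin i)),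
        DiscreteTopology Λ ∧
        Submodule.span ℝ (Λ : Set (EuclideanSpace ℝ (Fin i))) = ⊤ ∧
        t = sInf {s : ℝ | ∃ y : EuclideanSpace ℝ (Fin i), y ∈ Λ ∧ y ≠ 0 ∧ ‖y‖ ^ 2 = s} /
          (ZLattice.covolume Λ volume) ^ ((2 : ℝ) / i)}) :
    Real.log (∑' x : L, Real.exp (-Real.pi * ‖(x : E)‖ ^ 2)) ≤
      n * Real.log (∑' m : ℤ, Real.exp (-Real.pi * (m : ℝ) ^ 2)) +
        ∑ i ∈ Finset.Icc 1 n, Real.log (max 1 (γ i / lam)) := by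
  have hγ' : ∀ i ∈ Finset.Icc 1 n, γ i = hermiteConstant i := fun i hi ↦
    hγ i (Finset.mem_Icc.1 hi).1 (Finset.mem_Icc.1 hi).2
  have hspan : n = Module.finrank ℝ (Submodule.span ℝ (L : Set E)) := by rw [hL, finrank_top, hn]
  rw [Finset.sum_congr rfl fun i hi ↦ by rw [hγ' i hi], hspan, hlam]
  have hbound := theta_upper_bound_hermite_general L 0
  simp only [add_zero] at hbound
  exact hbound
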